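/- (Komatsu–Pollak-type bound) For every α > 0, 2·e^{α²/2}·N(−α) ≤ √(α²/(2π) + 1) − α/√(2π). -/

import Mathlib

open Real Filter Set

noncomputable def stdNormalCDF (x : ℝ) : ℝ :=
  (Real.sqrt (2 * Real.pi))⁻¹ * ∫ t in Set.Iic x, Real.exp (-t ^ 2 / 2)

noncomputable def chi (α x : ℝ) : ℝ :=
  stdNormalCDF (α / 2 * (x - 1 / x)) -
    Real.exp (α ^ 2 / 2) * stdNormalCDF (-(α / 2) * (x + 1 / x))

noncomputable def kpF (x : ℝ) : ℝ :=
  Real.exp (-x ^ 2 / 2) * ((Real.sqrt (x ^ 2 + 2 * Real.pi) - x) / 2)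
    + (∫ t in (0:ℝ)..x, Real.exp (-t ^ 2 / 2)) - Real.sqrt (2 * Real.pi) / 2

lemma kp_spos (x : ℝ) : 0 < Real.sqrt (x ^ 2 + 2 * Real.pi) :=
  Real.sqrt_pos.2 (by positivity)

lemma kp_integrable : MeasureTheory.Integrable (fun t : ℝ => Real.exp (-t ^ 2 / 2)) := by
  have := integrable_exp_neg_mul_sq (b := 1/2) (by norm_num)
  refine this.congr (Filter.Eventually.of_forall fun t => ?_)
  show Real.exp _ = Real.exp _
  congr 1; ring

lemma kp_half : ∫ t in Set.Ioi (0:ℝ), Real.exp (-t ^ 2 / 2) = Real.sqrt (2 * Real.pi) / 2 := by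
  have := integral_gaussian_Ioi (1/2)
  rw [show (2 * Real.pi) = Real.pi / (1/2) by ring, ← this]
  congr 1; ext t; congr 1; ring

noncomputable def kpD (x : ℝ) : ℝ :=
  Real.exp (-x ^ 2 / 2) * (Real.sqrt (x ^ 2 + 2 * Real.pi) * (1 + x ^ 2)
    - x * (x ^ 2 + (2 * Real.pi - 1))) / (2 * Real.sqrt (x ^ 2 + 2 * Real.pi))

lemma kp_deriv (x : ℝ) : HasDerivAt kpF (kpD x) x := by
  have hs := kp_spos x
  have hc : Continuous (fun t : ℝ => Real.exp (-t ^ 2 / 2)) := by fun_prop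
  have h1 : HasDerivAt (fun x : ℝ => ∫ t in (0:ℝ)..x, Real.exp (-t ^ 2 / 2))
      (Real.exp (-x ^ 2 / 2)) x :=
    hc.integral_hasStrictDerivAt 0 x |>.hasDerivAt
  have h2 : HasDerivAt (fun x : ℝ => x ^ 2 + 2 * Real.pi) (2 * x) x := by
    simpa using (hasDerivAt_pow 2 x).add_const (2 * Real.pi)
  have h3 := h2.sqrt (by positivity)
  have h4 : HasDerivAt (fun x : ℝ => -x ^ 2 / 2) (-x) x := by
    have := ((hasDerivAt_pow 2 x).neg).div_const 2
    refine this.congr_deriv ?_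
    simp; ring
  have h5 := ((h4.exp.mul ((h3.sub (hasDerivAt_id x)).div_const 2)).add h1).sub_const
    (Real.sqrt (2 * Real.pi) / 2)
  refine h5.congr_deriv ?_
  have hsq : Real.sqrt (x ^ 2 + 2 * Real.pi) ^ 2 = x ^ 2 + 2 * Real.pi :=
    Real.sq_sqrt (by positivity)
  have hp : 2 * Real.pi = Real.sqrt (x ^ 2 + 2 * Real.pi) ^ 2 - x ^ 2 := by linarith
  unfold kpD
  simp only [Pi.sub_apply, id]
  set s := Real.sqrt (x ^ 2 + 2 * Real.pi)
  rw [hp]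
  field_simp
  ring

noncomputable def kpP (x : ℝ) : ℝ :=
  (4 - 2 * Real.pi) * (x ^ 2) ^ 2 + (8 * Real.pi - 4 * Real.pi ^ 2) * x ^ 2 + 2 * Real.pi

lemma kp_anti {x y : ℝ} (hx : 0 ≤ x) (hxy : x ≤ y) : kpP y ≤ kpP x := by
  have hpi := Real.pi_gt_three
  have h : x ^ 2 ≤ y ^ 2 := by gcongr
  have h' : (x ^ 2) ^ 2 ≤ (y ^ 2) ^ 2 := by gcongr
  have e2 : 8 * Real.pi - 4 * Real.pi ^ 2 ≤ 0 := by nlinarith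
  unfold kpP
  nlinarith [mul_le_mul_of_nonpos_left h e2,
    mul_le_mul_of_nonpos_left h' (show 4 - 2 * Real.pi ≤ 0 by linarith)]

lemma kp_P (x : ℝ) : kpP x = (Real.sqrt (x ^ 2 + 2 * Real.pi) * (1 + x ^ 2)) ^ 2
    - (x * (x ^ 2 + (2 * Real.pi - 1))) ^ 2 := by
  rw [mul_pow, Real.sq_sqrt (by positivity)]
  unfold kpP; ring

lemma kp_D_nonneg {x : ℝ} (h : 0 ≤ kpP x) : 0 ≤ kpD x := by
  have hs := kp_spos x
  rw [kp_P] at h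
  have := le_of_abs_le (abs_le_of_sq_le_sq (by linarith :
    (x * (x ^ 2 + (2 * Real.pi - 1))) ^ 2 ≤ (Real.sqrt (x ^ 2 + 2 * Real.pi) * (1 + x ^ 2)) ^ 2)
    (by positivity))
  unfold kpD
  exact div_nonneg (mul_nonneg (Real.exp_pos _).le (by linarith)) (by positivity)

lemma kp_D_nonpos {x : ℝ} (hx : 0 ≤ x) (h : kpP x ≤ 0) : kpD x ≤ 0 := by
  have hs := kp_spos x
  have hpi := Real.pi_gt_three
  rw [kp_P] at h
  have hc : 0 ≤ 2 * Real.pi - 1 := by linarith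
  have := le_of_abs_le (abs_le_of_sq_le_sq (by linarith :
    (Real.sqrt (x ^ 2 + 2 * Real.pi) * (1 + x ^ 2)) ^ 2 ≤ (x * (x ^ 2 + (2 * Real.pi - 1))) ^ 2)
    (by positivity : 0 ≤ x * (x ^ 2 + (2 * Real.pi - 1))))
  unfold kpD
  exact div_nonpos_of_nonpos_of_nonneg
    (mul_nonpos_of_nonneg_of_nonpos (Real.exp_pos _).le (by linarith)) (by positivity)

lemma kp_F_nonneg {a : ℝ} (ha : 0 < a) : 0 ≤ kpF a := by
  have hcont : Continuous kpF := continuous_iff_continuousAt.2 fun x => (kp_deriv x).continuousAt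
  rcases le_total 0 (kpP a) with h | h
  · have hm : MonotoneOn kpF (Set.Icc 0 a) := by
      refine monotoneOn_of_deriv_nonneg (convex_Icc 0 a) hcont.continuousOn
        (fun x _ => (kp_deriv x).differentiableAt.differentiableWithinAt) fun x hx => ?_
      rw [interior_Icc] at hx
      rw [(kp_deriv x).deriv]
      exact kp_D_nonneg (h.trans (kp_anti hx.1.le hx.2.le))
    have h0 : kpF 0 = 0 := by simp [kpF]
    rw [← h0]
    exact hm ⟨le_rfl, ha.le⟩ ⟨ha.le, le_rfl⟩ ha.le
  · have hm : AntitoneOn kpF (Set.Ici a) := by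
      refine antitoneOn_of_deriv_nonpos (convex_Ici a) hcont.continuousOn
        (fun x _ => (kp_deriv x).differentiableAt.differentiableWithinAt) fun x hx => ?_
      rw [interior_Ici] at hx
      have hx' : a < x := hx
      rw [(kp_deriv x).deriv]
      exact kp_D_nonpos (ha.le.trans hx'.le) ((kp_anti ha.le hx'.le).trans h)
    have ht := MeasureTheory.intervalIntegral_tendsto_integral_Ioi (0:ℝ)
      (kp_integrable.integrableOn) Filter.tendsto_id
    rw [kp_half] at ht
    have ht' := ht.sub_const (Real.sqrt (2 * Real.pi) / 2)
    rw [sub_self] at ht'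
    refine le_of_tendsto ht' ?_
    filter_upwards [Filter.eventually_ge_atTop a] with x hx
    refine le_trans ?_ (hm (Set.mem_Ici.2 le_rfl) hx hx)
    have : x ≤ Real.sqrt (x ^ 2 + 2 * Real.pi) :=
      Real.le_sqrt_of_sq_le (by linarith [Real.pi_pos])
    have h6 : 0 ≤ Real.exp (-x ^ 2 / 2) * ((Real.sqrt (x ^ 2 + 2 * Real.pi) - x) / 2) :=
      mul_nonneg (Real.exp_pos _).le (by linarith)
    simp only [kpF, id]
    linarith

lemma kp_tail (a : ℝ) : ∫ t in Set.Iic (-a), Real.exp (-t ^ 2 / 2)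
    = Real.sqrt (2 * Real.pi) / 2 - ∫ t in (0:ℝ)..a, Real.exp (-t ^ 2 / 2) := by
  have h1 := integral_comp_neg_Iic (-a) (fun t : ℝ => Real.exp (-t ^ 2 / 2))
  simp only [neg_neg, even_two.neg_pow] at h1
  have h2 := intervalIntegral.integral_interval_add_Ioi (a := (0:ℝ)) (b := a)
    (f := fun t : ℝ => Real.exp (-t ^ 2 / 2)) (μ := MeasureTheory.volume)
    kp_integrable.integrableOn kp_integrable.integrableOn
  rw [kp_half] at h2
  rw [h1]; linarith

theorem komatsu_pollak (α : ℝ) (hα : 0 < α) :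
    2 * Real.exp (α ^ 2 / 2) * stdNormalCDF (-α) ≤
      Real.sqrt (α ^ 2 / (2 * Real.pi) + 1) - α / Real.sqrt (2 * Real.pi) := by
  have hF := kp_F_nonneg hα
  have hr : 0 < Real.sqrt (2 * Real.pi) := Real.sqrt_pos.2 (by positivity)
  unfold kpF at hF
  have e1 : Real.sqrt (α ^ 2 / (2 * Real.pi) + 1)
      = Real.sqrt (α ^ 2 + 2 * Real.pi) / Real.sqrt (2 * Real.pi) := by
    rw [← Real.sqrt_div (by positivity)]
    congr 1
    field_simp
  unfold stdNormalCDF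
  rw [kp_tail, e1, ← sub_div, le_div_iff₀ hr]
  have e2 : Real.exp (α ^ 2 / 2) * Real.exp (-α ^ 2 / 2) = 1 := by
    rw [← Real.exp_add, ← Real.exp_zero]; congr 1; ring
  have h7 := mul_nonneg (Real.exp_pos (α ^ 2 / 2)).le hF
  rw [add_sub_assoc, mul_add, ← mul_assoc, e2, one_mul] at h7
  set I := ∫ t in (0:ℝ)..α, Real.exp (-t ^ 2 / 2)
  have e3 : 2 * Real.exp (α ^ 2 / 2) * ((Real.sqrt (2 * Real.pi))⁻¹ *
      (Real.sqrt (2 * Real.pi) / 2 - I)) * Real.sqrt (2 * Real.pi)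
      = 2 * (Real.exp (α ^ 2 / 2) * (Real.sqrt (2 * Real.pi) / 2 - I)) := by
    field_simp
  rw [e3]
  linarith
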